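/- arXiv:math/9412227 — 2 statements merged into one kernel-verified Lean document; each statement's English description precedes it below -/
import Mathlib

section
/- (Terminating Dixon identity.) Let n be a natural number and a, b ∈ ℂ such that (1+a−b)_k ≠ 0 and (1+a+n)_k ≠ 0 for all 0 ≤ k ≤ n, and (1+a/2)_n ≠ 0, (1+a−b)_n ≠ 0. Then ∑_{k=0}^{n} ((a)_k · (b)_k · (−n)_k)/((1+a−b)_k · (1+a+n)_k · k!) = ((1+a)_n · (1+a/2−b)_n)/((1+a/2)_n · (1+a−b)_n). -/
/-- Pochhammer symbol (shifted factorial) of a complex number. -/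
noncomputable def poch (a : ℂ) (k : ℕ) : ℂ := ∏ j ∈ Finset.range k, (a + j)

lemma poch_last (x : ℂ) (k : ℕ) : poch x (k + 1) = poch x k * (x + k) := by
  simp [poch, Finset.prod_range_succ]

lemma poch_add (x : ℂ) (k m : ℕ) : poch x (k + m) = poch x k * poch (x + k) m := by
  simp only [poch, Finset.prod_range_add]
  congr 1
  apply Finset.prod_congr rfl
  intro j _
  push_cast
  ring

lemma poch_first (x : ℂ) (k : ℕ) : poch x (k + 1) = x * poch (x + 1) k := by
  rw [add_comm k 1, poch_add]
  simp [poch]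

/-- Polynomial form of the summand. -/
noncomputable def PP (a b : ℂ) (n k : ℕ) : ℂ :=
  (-1) ^ k * (n.choose k : ℂ) * poch a k * poch b k * poch (1 + a - b + k) (n - k) *
    poch (1 + a + n + k) (n - k)

/-- Telescoping companion. -/
noncomputable def QQ (a b : ℂ) (n k : ℕ) : ℂ :=
  -(1 / 2) * (-1) ^ k * ((n + 1).choose k * k / (n + 1) : ℂ) * poch a k * poch b k *
    poch (a - b + k) (n + 1 - k) * poch (1 + a + n + k) (n + 2 - k)

lemma step (a b : ℂ) (n k : ℕ) (hk : k ≤ n) :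
    (n + 1 + a / 2) * PP a b (n + 1) k
      - (n + 1 + a / 2 - b) * (a + 2 * n + 1) * (a + 2 * n + 2) * PP a b n k
      = QQ a b n (k + 1) - QQ a b n k := by
  obtain ⟨m, rfl⟩ := Nat.exists_eq_add_of_le hk
  have e1 : k + m - k = m := by omega
  have e2 : k + m + 1 - k = m + 1 := by omega
  have e3 : k + m + 2 - k = m + 1 + 1 := by omega
  have e4 : k + m + 1 - (k + 1) = m := by omega
  have e5 : k + m + 2 - (k + 1) = m + 1 := by omega
  unfold PP QQ
  rw [e1, e2, e3, e4, e5]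
  have hm : (m : ℂ) + 1 ≠ 0 := by exact_mod_cast Nat.succ_ne_zero m
  have hN : (k : ℂ) + m + 1 ≠ 0 := by exact_mod_cast Nat.succ_ne_zero (k + m)
  have c1 : ((k + m + 1).choose k : ℂ) = (k + m + 1) * (k + m).choose k / (m + 1) := by
    rw [eq_div_iff hm]
    have := Nat.choose_mul_succ_eq (k + m) k
    rw [e2] at this
    have h : ((k + m).choose k : ℂ) * (k + m + 1) = (k + m + 1).choose k * (m + 1) := by
      exact_mod_cast this
    linear_combination -h
  have c2 : ((k + m + 1).choose (k + 1) : ℂ) * (k + 1) = (k + m + 1) * (k + m).choose k := by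
    have := Nat.add_one_mul_choose_eq (k + m) k
    exact_mod_cast this.symm
  have w1 : poch (1 + a + ((k + m : ℕ) : ℂ) + k) (m + 1 + 1)
      = (1 + a + (k + m) + k) * poch (2 + a + (k + m) + k) (m + 1) := by
    rw [poch_first]; push_cast; ring_nf
  have w2 : poch (1 + a + ((k + m : ℕ) : ℂ) + k) m * (a + 2 * (k + m) + 1) * (a + 2 * (k + m) + 2)
      = (1 + a + (k + m) + k) * poch (2 + a + (k + m) + k) (m + 1) := by
    rw [← w1, poch_last, poch_last]; push_cast; ring
  have w3 : poch (a - b + k) (m + 1) = (a - b + k) * poch (1 + a - b + k) m := by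
    rw [poch_first]; ring_nf
  have w4 : poch (1 + a - b + k) (m + 1) = poch (1 + a - b + k) m * (1 + a - b + k + m) :=
    poch_last _ _
  have w5 : a - b + ((k + 1 : ℕ) : ℂ) = 1 + a - b + k := by push_cast; ring
  have w6 : 1 + a + ((k + m : ℕ) : ℂ) + ((k + 1 : ℕ) : ℂ) = 2 + a + (k + m) + k := by
    push_cast; ring
  have w7 : 1 + a + ((k + m + 1 : ℕ) : ℂ) + (k : ℂ) = 2 + a + (k + m) + k := by
    push_cast; ring
  rw [w1, w3, w4, w5, w6, w7, poch_last a, poch_last b]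
  push_cast
  push_cast at w2
  rw [c2, c1]
  generalize poch (2 + a + (k + m) + k) (m + 1) = v at *
  generalize poch (1 + a + (k + m) + k) m = w at *
  generalize poch (1 + a - b + k) m = u at *
  generalize poch a k = A at *
  generalize poch b k = B at *
  generalize ((k + m).choose k : ℂ) = C at *
  have key : (k + m + 1 + a / 2) * ((-1) ^ k * ((k + m + 1) * C / (m + 1)) * A * B * (u * (1 + a - b + k + m)) * v)
      - (k + m + 1 + a / 2 - b) * ((1 + a + (k + m) + k) * v) * ((-1) ^ k * C * A * B * u)
      = -(1 / 2) * (-1) ^ (k + 1) * ((k + m + 1) * C / (k + m + 1)) * (A * (a + k)) * (B * (b + k)) * u * v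
      - -(1 / 2) * (-1) ^ k * ((k + m + 1) * C / (m + 1) * k / (k + m + 1)) * A * B * ((a - b + k) * u) * ((1 + a + (k + m) + k) * v) := by
    rw [pow_succ]
    field_simp
    ring
  linear_combination key - (k + m + 1 + a / 2 - b) * ((-1) ^ k * C * A * B * u) * w2

lemma sumP (a b : ℂ) (n : ℕ) :
    (∑ k ∈ Finset.range (n + 1), PP a b n k) * poch (1 + a / 2) n
      = poch (1 + a) (2 * n) * poch (1 + a / 2 - b) n := by
  induction n with
  | zero => simp [PP, poch]
  | succ n ih =>
    have h1 := Finset.sum_congr rfl (fun k hk => step a b n k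
      (Nat.lt_succ_iff.mp (Finset.mem_range.mp hk)) : ∀ k ∈ Finset.range (n + 1), _ = _)
    rw [Finset.sum_range_sub, Finset.sum_sub_distrib, ← Finset.mul_sum, ← Finset.mul_sum] at h1
    have h0 : QQ a b n 0 = 0 := by simp [QQ]
    have hN : (n : ℂ) + 1 ≠ 0 := by exact_mod_cast Nat.succ_ne_zero n
    have hl : (n + 1 + a / 2) * PP a b (n + 1) (n + 1) = - QQ a b n (n + 1) := by
      have e : n + 2 - (n + 1) = 1 := by omega
      simp only [PP, QQ, e, Nat.sub_self, Nat.choose_self]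
      simp [poch]
      field_simp
      ring
    rw [Finset.sum_range_succ, show 2 * (n + 1) = 2 * n + 1 + 1 by ring, poch_last, poch_last,
      poch_last, poch_last]
    push_cast
    linear_combination (h1 + hl - h0) * poch (1 + a / 2) n
      + (n + 1 + a / 2 - b) * (a + 2 * n + 1) * (a + 2 * n + 2) * ih

lemma poch_neg (n k : ℕ) (hk : k ≤ n) :
    poch (-(n : ℂ)) k = (-1) ^ k * n.choose k * k.factorial := by
  induction k with
  | zero => simp [poch]
  | succ k ih =>
    rw [poch_last, ih (by omega)]
    have h := Nat.choose_succ_right_eq n k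
    have h' : (n.choose (k + 1) : ℂ) * (k + 1) = n.choose k * (n - k) := by
      rw [← Nat.cast_sub (by omega)]
      exact_mod_cast h
    rw [Nat.factorial_succ]
    push_cast
    rw [pow_succ]
    linear_combination (-1) ^ k * (k.factorial : ℂ) * h'

/-- Terminating Dixon identity. -/
theorem dixon_terminating (n : ℕ) (a b : ℂ)
    (h1 : ∀ k ≤ n, poch (1 + a - b) k ≠ 0)
    (h2 : ∀ k ≤ n, poch (1 + a + (n : ℂ)) k ≠ 0)
    (hn1 : poch (1 + a / 2) n ≠ 0) (hn2 : poch (1 + a - b) n ≠ 0) :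
    ∑ k ∈ Finset.range (n + 1),
        poch a k * poch b k * poch (-(n : ℂ)) k /
          (poch (1 + a - b) k * poch (1 + a + (n : ℂ)) k * (k.factorial : ℂ))
      = poch (1 + a) n * poch (1 + a / 2 - b) n /
          (poch (1 + a / 2) n * poch (1 + a - b) n) := by
  have hn3 := h2 n le_rfl
  have hs : ∀ k ∈ Finset.range (n + 1),
      poch a k * poch b k * poch (-(n : ℂ)) k /
          (poch (1 + a - b) k * poch (1 + a + (n : ℂ)) k * (k.factorial : ℂ))
      = PP a b n k / (poch (1 + a - b) n * poch (1 + a + n) n) := by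
    intro k hk
    have hk' : k ≤ n := Nat.lt_succ_iff.mp (Finset.mem_range.mp hk)
    have hf : (k.factorial : ℂ) ≠ 0 := by exact_mod_cast k.factorial_ne_zero
    have d1 := h1 k hk'
    have d2 := h2 k hk'
    have s1 := poch_add (1 + a - b) k (n - k)
    have s2 := poch_add (1 + a + n) k (n - k)
    rw [Nat.add_sub_cancel' hk'] at s1 s2
    rw [div_eq_div_iff (mul_ne_zero (mul_ne_zero d1 d2) hf) (mul_ne_zero hn2 hn3),
      s1, s2, poch_neg n k hk', PP]
    ring
  rw [Finset.sum_congr rfl hs, ← Finset.sum_div,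
    div_eq_div_iff (mul_ne_zero hn2 hn3) (mul_ne_zero hn1 hn2)]
  have h := sumP a b n
  rw [two_mul, poch_add] at h
  linear_combination poch (1 + a - b) n * h
end

section
/- (Dougall's theorem.) Let n be a natural number and a, b, c, d ∈ ℂ such that (a/2)_k, (1+a−b)_k, (1+a−c)_k, (1+a−d)_k, (b+c+d−a−n)_k, (1+a+n)_k are all nonzero for 0 ≤ k ≤ n, and (1+a−b)_n, (1+a−c)_n, (1+a−d)_n, (1+a−b−c−d)_n are nonzero. Then ∑_{k=0}^{n} [(a)_k (1+a/2)_k (b)_k (c)_k (d)_k (1+2a−b−c−d+n)_k (−n)_k] / [(a/2)_k (1+a−b)_k (1+a−c)_k (1+a−d)_k (b+c+d−a−n)_k (1+a+n)_k · k!] = [(1+a)_n (1+a−b−c)_n (1+a−b−d)_n (1+a−c−d)_n] / [(1+a−b)_n (1+a−c)_n (1+a−d)_n (1+a−b−c−d)_n]. -/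
/-- The summand. -/
noncomputable def dT (a b c d : ℂ) (n k : ℕ) : ℂ :=
  poch a k * poch (1 + a / 2) k * poch b k * poch c k * poch d k *
            poch (1 + 2 * a - b - c - d + (n : ℂ)) k * poch (-(n : ℂ)) k /
          (poch (a / 2) k * poch (1 + a - b) k * poch (1 + a - c) k *
            poch (1 + a - d) k * poch (b + c + d - a - (n : ℂ)) k *
            poch (1 + a + (n : ℂ)) k * (k.factorial : ℂ))

/-- The right-hand side. -/
noncomputable def dR (a b c d : ℂ) (n : ℕ) : ℂ :=
  poch (1 + a) n * poch (1 + a - b - c) n * poch (1 + a - b - d) n *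
          poch (1 + a - c - d) n /
          (poch (1 + a - b) n * poch (1 + a - c) n * poch (1 + a - d) n *
            poch (1 + a - b - c - d) n)

theorem poch_succ (a : ℂ) (k : ℕ) : poch a (k + 1) = poch a k * (a + k) := by
  simp [poch, Finset.prod_range_succ]

theorem poch_zero (a : ℂ) : poch a 0 = 1 := by simp [poch]

theorem poch_ne (a : ℂ) (k : ℕ) : poch a k ≠ 0 ↔ ∀ j < k, a + (j : ℂ) ≠ 0 := by
  simp [poch, Finset.prod_ne_zero_iff]

theorem dT_zero (a b c d : ℂ) (n : ℕ) : dT a b c d n 0 = 1 := by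
  simp [dT, poch_zero]

theorem dT_succ (a b c d : ℂ) (n k : ℕ) (h : a + 2 * k ≠ 0) :
    dT a b c d n (k + 1) = dT a b c d n k *
      (((a + k) * (a + 2 * k + 2) * (b + k) * (c + k) * (d + k) *
        (1 + 2 * a - b - c - d + n + k) * (-n + k)) /
       ((a + 2 * k) * (1 + a - b + k) * (1 + a - c + k) * (1 + a - d + k) *
        (b + c + d - a - n + k) * (1 + a + n + k) * (k + 1))) := by
  have e : (1 + a / 2 + k) / (a / 2 + k) = (a + 2 * k + 2) / (a + 2 * k) := by
    have : a / 2 + k ≠ 0 := fun h' => h (by linear_combination 2 * h')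
    field_simp
    ring
  simp only [dT, poch_succ, Nat.factorial_succ]
  push_cast
  have e' : (1 + a / 2 + k) * (a / 2 + k)⁻¹ = (a + 2 * k + 2) * (a + 2 * k)⁻¹ := by
    simpa only [div_eq_mul_inv] using e
  rw [show poch (1 + a / 2) k * (1 + a / 2 + k) = (1 + a / 2 + k) * poch (1 + a / 2) k by ring,
    show poch (a / 2) k * (a / 2 + k) = (a / 2 + k) * poch (a / 2) k by ring]
  generalize 1 + a / 2 + (k : ℂ) = u at *
  generalize a / 2 + (k : ℂ) = v at *
  generalize a + 2 * (k : ℂ) + 2 = u' at *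
  generalize a + 2 * (k : ℂ) = v' at *
  generalize 1 + 2 * a - b - c - d + (n : ℂ) = y1
  generalize b + c + d - a - (n : ℂ) = y2
  generalize 1 + a + (n : ℂ) = y3
  generalize 1 + a - b = y4
  generalize 1 + a - c = y5
  generalize 1 + a - d = y6
  simp only [div_eq_mul_inv, mul_inv]
  generalize (poch y2 k)⁻¹ = p2
  generalize (poch y3 k)⁻¹ = p3
  generalize (poch y4 k)⁻¹ = p4
  generalize (poch y5 k)⁻¹ = p5
  generalize (poch y6 k)⁻¹ = p6
  generalize (y2 + (k : ℂ))⁻¹ = r2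
  generalize (y3 + (k : ℂ))⁻¹ = r3
  generalize (y4 + (k : ℂ))⁻¹ = r4
  generalize (y5 + (k : ℂ))⁻¹ = r5
  generalize (y6 + (k : ℂ))⁻¹ = r6
  generalize ((k : ℂ) + 1)⁻¹ = r7
  generalize y1 + (k : ℂ) = s1
  generalize a + (k : ℂ) = s2
  generalize b + (k : ℂ) = s3
  generalize c + (k : ℂ) = s4
  generalize d + (k : ℂ) = s5
  generalize -(n : ℂ) + (k : ℂ) = s6
  generalize (k.factorial : ℂ)⁻¹ = r8
  generalize poch y1 k = t1
  generalize poch (-(n : ℂ)) k = t2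
  generalize poch (1 + a * 2⁻¹) k = t3
  generalize (poch (a * 2⁻¹) k)⁻¹ = t4
  generalize v⁻¹ = vi at *
  generalize v'⁻¹ = vi' at *
  linear_combination (poch a k * poch b k * poch c k * poch d k * p2 * p3 * p4 * p5 * p6 * r2 * r3 *
    r4 * r5 * r6 * r7 * r8 * s1 * s2 * s3 * s4 * s5 * s6 * t1 * t2 * t3 * t4) * e'

theorem dR_succ (a b c d : ℂ) (n : ℕ) :
    dR a b c d (n + 1) = dR a b c d n *
      (((1 + a + n) * (1 + a - b - c + n) * (1 + a - b - d + n) * (1 + a - c - d + n)) /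
       ((1 + a - b + n) * (1 + a - c + n) * (1 + a - d + n) * (1 + a - b - c - d + n))) := by
  simp only [dR, poch_succ]
  rw [div_mul_div_comm]
  congr 1 <;> ring

theorem dT_n (a b c d : ℂ) (n k : ℕ) (hk : k ≤ n)
    (ha : ∀ j : ℕ, a + j ≠ 0) (he : ∀ j : ℕ, 1 + 2 * a - b - c - d + j ≠ 0)
    (hb : ∀ j < n + 1, 1 + a - b + (j : ℂ) ≠ 0)
    (hc : ∀ j < n + 1, 1 + a - c + (j : ℂ) ≠ 0)
    (hd : ∀ j < n + 1, 1 + a - d + (j : ℂ) ≠ 0)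
    (hs : ∀ j < n + 1, 1 + a - b - c - d + (j : ℂ) ≠ 0) :
    dT a b c d (n + 1) k = dT a b c d n k *
      (((1 + 2 * a - b - c - d + n + k) * (n + 1) * (b + c + d - a - n - 1 + k) * (1 + a + n)) /
       ((1 + 2 * a - b - c - d + n) * (n + 1 - k) * (b + c + d - a - n - 1) * (1 + a + n + k))) := by
  have n1 : (n : ℂ) + 1 ≠ 0 := Nat.cast_add_one_ne_zero n
  have n2 := he n
  have n3 : b + c + d - a - n - 1 ≠ 0 := fun h => hs n (by omega) (by linear_combination -h)
  have n4 : 1 + a + n ≠ 0 := fun h => ha (n + 1) (by push_cast; linear_combination h)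
  induction k with
  | zero =>
    simp only [dT_zero, Nat.cast_zero, add_zero, sub_zero]
    field_simp
  | succ k ih =>
    have m0 : a + 2 * k ≠ 0 := by have := ha (2 * k); push_cast at this; exact this
    have m1 : 1 + a + n + k ≠ 0 := fun h => ha (n + 1 + k) (by push_cast; linear_combination h)
    have m2 : 1 + a + n + (k + 1) ≠ 0 :=
      fun h => ha (n + 1 + k + 1) (by push_cast; linear_combination h)
    have m3 : (n : ℂ) + 1 - k ≠ 0 := by
      intro h
      have : ((n + 1 : ℕ) : ℂ) = (k : ℕ) := by push_cast; linear_combination h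
      have := Nat.cast_injective this
      omega
    have m4 : (n : ℂ) + 1 - (k + 1) ≠ 0 := by
      intro h
      have : ((n : ℕ) : ℂ) = (k : ℕ) := by linear_combination h
      have := Nat.cast_injective this
      omega
    have m5 := hb k (by omega)
    have m6 := hc k (by omega)
    have m7 := hd k (by omega)
    have m8 : b + c + d - a - n + k ≠ 0 := by
      intro h
      refine hs (n - k - 1) (by omega) ?_
      rw [Nat.cast_sub (by omega), Nat.cast_sub (by omega)]
      push_cast
      linear_combination -h
    have m9 : b + c + d - a - n - 1 + k ≠ 0 := by
      intro h
      refine hs (n - k) (by omega) ?_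
      rw [Nat.cast_sub (by omega)]
      linear_combination -h
    have m10 : (k : ℂ) + 1 ≠ 0 := Nat.cast_add_one_ne_zero k
    have m11 : 1 + 2 * a - b - c - d + n + k ≠ 0 := by
      have := he (n + k); push_cast at this; intro h; exact this (by linear_combination h)
    rw [dT_succ _ _ _ _ _ _ m0, dT_succ _ _ _ _ _ _ m0, ih (by omega)]
    push_cast
    simp only [mul_assoc (dT a b c d n k)]
    congr 1
    have q1 : 1 + a + ((n : ℂ) + 1) + k = 1 + a + n + (k + 1) := by ring
    have q2 : b + c + d - a - ((n : ℂ) + 1) + k = b + c + d - a - n - 1 + k := by ring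
    have q3 : b + c + d - a - (n : ℂ) - 1 + (k + 1) = b + c + d - a - n + k := by ring
    have q4 : (n : ℂ) + 1 - (k + 1) = n - k := by ring
    have q5 : -(n : ℂ) + k = -(n - k) := by ring
    have q6 : -((n : ℂ) + 1) + k = -(n + 1 - k) := by ring
    have q7 : 1 + 2 * a - b - c - d + ((n : ℂ) + 1) + k =
      1 + 2 * a - b - c - d + n + (k + 1) := by ring
    rw [q4] at m4
    rw [q1, q2, q3, q4, q5, q6, q7]
    clear ih q1 q2 q3 q4 q5 q6 q7 ha he hb hc hd hs
    generalize (n : ℂ) - k = z1 at *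
    generalize (n : ℂ) + 1 - k = z2 at *
    generalize 1 + 2 * a - b - c - d + (n : ℂ) + (k + 1) = z3 at *
    generalize 1 + 2 * a - b - c - d + (n : ℂ) + k = z4 at *
    generalize 1 + 2 * a - b - c - d + (n : ℂ) = z5 at *
    generalize b + c + d - a - (n : ℂ) - 1 + k = z6 at *
    generalize b + c + d - a - (n : ℂ) - 1 = z7 at *
    generalize b + c + d - a - (n : ℂ) + k = z8 at *
    generalize 1 + a + (n : ℂ) + (k + 1) = z9 at *
    generalize 1 + a + (n : ℂ) + k = z10 at *
    generalize 1 + a + (n : ℂ) = z11 at *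
    generalize 1 + a - b + (k : ℂ) = z12 at *
    generalize 1 + a - c + (k : ℂ) = z13 at *
    generalize 1 + a - d + (k : ℂ) = z14 at *
    generalize a + 2 * (k : ℂ) + 2 = z15 at *
    generalize a + 2 * (k : ℂ) = z16 at *
    generalize a + (k : ℂ) = z17 at *
    generalize b + (k : ℂ) = z18 at *
    generalize c + (k : ℂ) = z19 at *
    generalize d + (k : ℂ) = z20 at *
    generalize (k : ℂ) + 1 = z21 at *
    generalize (n : ℂ) + 1 = z22 at *
    field_simp

set_option maxHeartbeats 4000000 in
/-- Telescoped partial sums. -/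
theorem dougall_partial (a b c d : ℂ) (n m : ℕ) (hm : m ≤ n)
    (ha : ∀ j : ℕ, a + j ≠ 0) (he : ∀ j : ℕ, 1 + 2 * a - b - c - d + j ≠ 0)
    (hb : ∀ j < n + 1, 1 + a - b + (j : ℂ) ≠ 0)
    (hc : ∀ j < n + 1, 1 + a - c + (j : ℂ) ≠ 0)
    (hd : ∀ j < n + 1, 1 + a - d + (j : ℂ) ≠ 0)
    (hs : ∀ j < n + 1, 1 + a - b - c - d + (j : ℂ) ≠ 0) :
    ∑ k ∈ Finset.range (m + 1),
      (((1 + a - b + n) * (1 + a - c + n) * (1 + a - d + n) * (1 + a - b - c - d + n)) *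
          dT a b c d (n + 1) k -
        ((1 + a + n) * (1 + a - b - c + n) * (1 + a - b - d + n) * (1 + a - c - d + n)) *
          dT a b c d n k) =
      -((1 + a + n) * (1 + 2 * a - b - c - d + 2 * n + 1) / (1 + 2 * a - b - c - d + n)) *
        ((a + m) * (b + m) * (c + m) * (d + m) * (1 + 2 * a - b - c - d + n + m) /
          ((a + 2 * m) * (1 + a + n + m))) * dT a b c d n m := by
  have n1 : (n : ℂ) + 1 ≠ 0 := Nat.cast_add_one_ne_zero n
  have n2 := he n
  have n3 : b + c + d - a - n - 1 ≠ 0 := fun h => hs n (by omega) (by linear_combination -h)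
  have n4 : 1 + a + n ≠ 0 := fun h => ha (n + 1) (by push_cast; linear_combination h)
  induction m with
  | zero =>
    have a0 : a ≠ 0 := by simpa using ha 0
    simp only [zero_add, Finset.sum_range_one, dT_zero, Nat.cast_zero, add_zero, mul_zero]
    generalize hE : 1 + 2 * a - b - c - d + (n : ℂ) = E at *
    field_simp
    subst hE
    ring
  | succ m ih =>
    have m0 : a + 2 * m ≠ 0 := by have := ha (2 * m); push_cast at this; exact this
    have m0' : a + 2 * (m + 1) ≠ 0 := by
      have := ha (2 * (m + 1)); push_cast at this; exact this
    have m1 : 1 + a + n + m ≠ 0 := fun h => ha (n + 1 + m) (by push_cast; linear_combination h)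
    have m2 : 1 + a + n + (m + 1) ≠ 0 :=
      fun h => ha (n + 1 + m + 1) (by push_cast; linear_combination h)
    have m4 : (n : ℂ) - m ≠ 0 := by
      intro h
      have : ((n : ℕ) : ℂ) = (m : ℕ) := by linear_combination h
      have := Nat.cast_injective this
      omega
    have m5 := hb m (by omega)
    have m6 := hc m (by omega)
    have m7 := hd m (by omega)
    have m8 : b + c + d - a - n + m ≠ 0 := by
      intro h
      refine hs (n - m - 1) (by omega) ?_
      rw [Nat.cast_sub (by omega), Nat.cast_sub (by omega)]
      push_cast
      linear_combination -h
    have m10 : (m : ℂ) + 1 ≠ 0 := Nat.cast_add_one_ne_zero m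
    have key : dT a b c d n m * ((a + m) * (b + m) * (c + m) * (d + m) *
        (1 + 2 * a - b - c - d + n + m) / ((a + 2 * m) * (1 + a + n + m))) =
        dT a b c d n (m + 1) * (-((m + 1) * (1 + a - b + m) * (1 + a - c + m) * (1 + a - d + m) *
          (b + c + d - a - n + m)) / ((a + 2 * (m + 1)) * (n - m))) := by
      rw [dT_succ _ _ _ _ _ _ m0, mul_assoc (dT a b c d n m)]
      congr 1
      have q1 : a + 2 * (m : ℂ) + 2 = a + 2 * (m + 1) := by ring
      have q2 : -(n : ℂ) + m = -(n - m) := by ring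
      rw [q1, q2]
      clear ih q1 q2 ha he hb hc hd hs
      generalize (n : ℂ) - m = z1 at *
      generalize 1 + 2 * a - b - c - d + (n : ℂ) + m = z4 at *
      generalize b + c + d - a - (n : ℂ) + m = z8 at *
      generalize 1 + a + (n : ℂ) + m = z10 at *
      generalize 1 + a - b + (m : ℂ) = z12 at *
      generalize 1 + a - c + (m : ℂ) = z13 at *
      generalize 1 + a - d + (m : ℂ) = z14 at *
      generalize a + 2 * ((m : ℂ) + 1) = z15 at *
      generalize a + 2 * (m : ℂ) = z16 at *
      generalize a + (m : ℂ) = z17 at *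
      generalize b + (m : ℂ) = z18 at *
      generalize c + (m : ℂ) = z19 at *
      generalize d + (m : ℂ) = z20 at *
      generalize (m : ℂ) + 1 = z21 at *
      field_simp
    rw [Finset.sum_range_succ, ih (by omega), dT_n a b c d n (m + 1) hm ha he hb hc hd hs,
      mul_assoc, mul_comm _ (dT a b c d n m), key]
    generalize dT a b c d n (m + 1) = t
    push_cast
    have q3 : b + c + d - a - (n : ℂ) - 1 + (m + 1) = b + c + d - a - n + m := by ring
    have q4 : (n : ℂ) + 1 - (m + 1) = n - m := by ring
    have q5 : 1 + a - b - c - d + (n : ℂ) = -(b + c + d - a - n - 1) := by ring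
    rw [q3, q4, q5]
    clear ih key q3 q4 q5 ha he hb hc hd hs
    generalize hE : 1 + 2 * a - b - c - d + (n : ℂ) = E at *
    generalize hN : (n : ℂ) - m = N at *
    generalize hS : b + c + d - a - (n : ℂ) - 1 = S at *
    generalize hA : a + 2 * ((m : ℂ) + 1) = A at *
    generalize hM : 1 + a + (n : ℂ) + (m + 1) = M at *
    field_simp
    subst hE hN hS hA hM
    ring

theorem dougall_generic (a b c d : ℂ) (n : ℕ)
    (ha : ∀ j : ℕ, a + j ≠ 0) (he : ∀ j : ℕ, 1 + 2 * a - b - c - d + j ≠ 0)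
    (hb : ∀ j < n, 1 + a - b + (j : ℂ) ≠ 0)
    (hc : ∀ j < n, 1 + a - c + (j : ℂ) ≠ 0)
    (hd : ∀ j < n, 1 + a - d + (j : ℂ) ≠ 0)
    (hs : ∀ j < n, 1 + a - b - c - d + (j : ℂ) ≠ 0) :
    ∑ k ∈ Finset.range (n + 1), dT a b c d n k = dR a b c d n := by
  induction n with
  | zero => simp [dT, dR, poch_zero]
  | succ n ih =>
    have ih' := ih (fun j hj => hb j (by omega)) (fun j hj => hc j (by omega))
      (fun j hj => hd j (by omega)) (fun j hj => hs j (by omega))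
    have hp := dougall_partial a b c d n n le_rfl ha he hb hc hd hs
    rw [Finset.sum_sub_distrib, ← Finset.mul_sum, ← Finset.mul_sum, ih'] at hp
    have n1 : (n : ℂ) + 1 ≠ 0 := Nat.cast_add_one_ne_zero n
    have n2 := he n
    have n3 : b + c + d - a - n - 1 ≠ 0 := fun h => hs n (by omega) (by linear_combination -h)
    have n4 : 1 + a + n ≠ 0 := fun h => ha (n + 1) (by push_cast; linear_combination h)
    have m0 : a + 2 * n ≠ 0 := by have := ha (2 * n); push_cast at this; exact this
    have m1 : 1 + a + n + n ≠ 0 := fun h => ha (n + 1 + n) (by push_cast; linear_combination h)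
    have m2 : 1 + a + (n + 1) + n ≠ 0 :=
      fun h => ha (n + 1 + n + 1) (by push_cast; linear_combination h)
    have m5 := hb n (by omega)
    have m6 := hc n (by omega)
    have m7 := hd n (by omega)
    have m8 := hs n (by omega)
    have last : ((1 + a - b + n) * (1 + a - c + n) * (1 + a - d + n) *
        (1 + a - b - c - d + n)) * dT a b c d (n + 1) (n + 1) =
      ((1 + a + n) * (1 + 2 * a - b - c - d + 2 * n + 1) / (1 + 2 * a - b - c - d + n)) *
        ((a + n) * (b + n) * (c + n) * (d + n) * (1 + 2 * a - b - c - d + n + n) /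
          ((a + 2 * n) * (1 + a + n + n))) * dT a b c d n n := by
      rw [dT_succ _ _ _ _ _ _ m0, dT_n a b c d n n le_rfl ha he hb hc hd hs]
      generalize dT a b c d n n = t
      push_cast
      have q2 : b + c + d - a - ((n : ℂ) + 1) + n = -(1 + a - b - c - d + n) + n := by ring
      have q3 : b + c + d - a - (n : ℂ) - 1 = -(1 + a - b - c - d + n) := by ring
      have q4 : (n : ℂ) + 1 - n = 1 := by ring
      have q5 : -((n : ℂ) + 1) + n = -1 := by ring
      rw [q2, q3, q4, q5]
      by_cases hz : -(1 + a - b - c - d + n) + (n : ℂ) = 0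
      · refine absurd hz fun h => hs 0 (by omega) ?_
        push_cast
        linear_combination -h
      field_simp
      ring
    rw [Finset.sum_range_succ, dR_succ, mul_div_assoc', eq_div_iff (by simp [*])]
    linear_combination hp + last

open Filter Topology in
theorem poch_continuous (k : ℕ) : Continuous fun x => poch x k := by
  unfold poch
  fun_prop

/-- Dougall's theorem (terminating very-well-poised ₇F₆ summation). -/
theorem dougall (n : ℕ) (a b c d : ℂ)
    (h1 : ∀ k ≤ n, poch (a / 2) k ≠ 0)
    (h2 : ∀ k ≤ n, poch (1 + a - b) k ≠ 0)
    (h3 : ∀ k ≤ n, poch (1 + a - c) k ≠ 0)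
    (h4 : ∀ k ≤ n, poch (1 + a - d) k ≠ 0)
    (h5 : ∀ k ≤ n, poch (b + c + d - a - (n : ℂ)) k ≠ 0)
    (h6 : ∀ k ≤ n, poch (1 + a + (n : ℂ)) k ≠ 0)
    (hn1 : poch (1 + a - b) n ≠ 0) (hn2 : poch (1 + a - c) n ≠ 0)
    (hn3 : poch (1 + a - d) n ≠ 0) (hn4 : poch (1 + a - b - c - d) n ≠ 0) :
    ∑ k ∈ Finset.range (n + 1),
        poch a k * poch (1 + a / 2) k * poch b k * poch c k * poch d k *
            poch (1 + 2 * a - b - c - d + (n : ℂ)) k * poch (-(n : ℂ)) k /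
          (poch (a / 2) k * poch (1 + a - b) k * poch (1 + a - c) k *
            poch (1 + a - d) k * poch (b + c + d - a - (n : ℂ)) k *
            poch (1 + a + (n : ℂ)) k * (k.factorial : ℂ))
      = poch (1 + a) n * poch (1 + a - b - c) n * poch (1 + a - b - d) n *
          poch (1 + a - c - d) n /
          (poch (1 + a - b) n * poch (1 + a - c) n * poch (1 + a - d) n *
            poch (1 + a - b - c - d) n) := by
  have key : ∑ k ∈ Finset.range (n + 1), dT a b c d n k = dR a b c d n := by
    have pc : ∀ k : ℕ, ∀ f : ℂ → ℂ, Continuous f → ContinuousAt (fun x => poch (f x) k) a :=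
      fun k f hf => ((poch_continuous k).comp hf).continuousAt
    have cL : ContinuousAt (fun x => ∑ k ∈ Finset.range (n + 1), dT x b c d n k) a := by
      refine tendsto_finsetSum _ fun k hk => ?_
      have hk : k ≤ n := by simpa [Nat.lt_succ_iff] using hk
      have hf : (k.factorial : ℂ) ≠ 0 := by exact_mod_cast k.factorial_ne_zero
      unfold dT
      refine ContinuousAt.div ?_ ?_ ?_
      · repeat' apply ContinuousAt.mul
        all_goals exact pc _ _ (by fun_prop)
      · repeat' apply ContinuousAt.mul
        all_goals first | exact continuousAt_const | exact pc _ _ (by fun_prop)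
      · simp [h1 k hk, h2 k hk, h3 k hk, h4 k hk, h5 k hk, h6 k hk, hf]
    have cR : ContinuousAt (fun x => dR x b c d n) a := by
      unfold dR
      refine ContinuousAt.div ?_ ?_ ?_
      · repeat' apply ContinuousAt.mul
        all_goals exact pc _ _ (by fun_prop)
      · repeat' apply ContinuousAt.mul
        all_goals exact pc _ _ (by fun_prop)
      · simp [hn1, hn2, hn3, hn4]
    have ev1 := (pc n (fun x => 1 + x - b) (by fun_prop)).eventually_ne hn1
    have ev2 := (pc n (fun x => 1 + x - c) (by fun_prop)).eventually_ne hn2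
    have ev3 := (pc n (fun x => 1 + x - d) (by fun_prop)).eventually_ne hn3
    have ev4 := (pc n (fun x => 1 + x - b - c - d) (by fun_prop)).eventually_ne hn4
    -- a sequence-free genericity argument: the bad set is countable, so its complement is dense
    let B : Set ℂ := (Set.range fun j : ℕ => -(j : ℂ)) ∪
      (Set.range fun j : ℕ => (b + c + d - 1 - (j : ℂ)) / 2)
    have hB : B.Countable := (Set.countable_range _).union (Set.countable_range _)
    have hD : Dense Bᶜ := hB.dense_compl ℂ
    have hne : (nhdsWithin a Bᶜ).NeBot := mem_closure_iff_nhdsWithin_neBot.mp (hD a)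
    have heq : ∀ᶠ x in nhdsWithin a Bᶜ,
        ∑ k ∈ Finset.range (n + 1), dT x b c d n k = dR x b c d n := by
      filter_upwards [self_mem_nhdsWithin, nhdsWithin_le_nhds ev1, nhdsWithin_le_nhds ev2,
        nhdsWithin_le_nhds ev3, nhdsWithin_le_nhds ev4] with x hx e1 e2 e3 e4
      refine dougall_generic x b c d n ?_ ?_ ((poch_ne _ _).1 e1) ((poch_ne _ _).1 e2)
        ((poch_ne _ _).1 e3) ((poch_ne _ _).1 e4)
      · intro j h
        exact hx (Or.inl ⟨j, by linear_combination -h⟩)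
      · intro j h
        exact hx (Or.inr ⟨j, by linear_combination -h / 2⟩)
    exact tendsto_nhds_unique
      ((cL.tendsto.mono_left nhdsWithin_le_nhds).congr' heq)
      (cR.tendsto.mono_left nhdsWithin_le_nhds)
  exact key
end
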